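/- The assignment e_i ↦ e_{i+1} for all i, (0|d−1) ↦ (−1)^d (1|0), and (i|j) ↦ (i+1|j+1) for all other adjacent pairs (i,j) in ℤ/d extends to a well-defined ℂ-algebra automorphism τ of Ẑ_d. Moreover, τ^d = id if d is even, and τ^{2d} = id if d is odd. -/

import Mathlib

/-!
Put `c (i, j) = (-1)^d` for `(i, j) = (0, -1)` and `c (i, j) = 1` otherwise, so that `τ` is the
rule `(i|j) ↦ c (i, j) • (i+1|j+1)`, which also sends the zero generators (non-adjacent `i`, `j`)
to zero. The defining relations are preserved: away from the vertices `-1` and `0` the rule is a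
plain translation; the loop relation at `-1` is sent to the twisted relation at `0`, the sign
coming from `c (0, -1)`; and the sign of the twisted relation at `0` is cancelled by `c (0, -1)`,
giving the untwisted relation at `1` (`tauHom`).

Iterating, `τ^n (i|j) = (∏_{k < n} c (i+k, j+k)) • (i+n|j+n)`. The factors are `d`-periodic in `k`
and square to `1`, so the product over `k < 2d` is the square of the product over `k < d`, hence
is `1`, and `τ^{2d} = id`. In particular the endomorphism `τ` is bijective. For even `d` all the
factors are `1`, so already `τ^d = id`.
-/

/-! The affine zigzag algebra `Ẑ_d`. -/

set_option synthInstance.maxHeartbeats 1000000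
set_option maxHeartbeats 2000000

noncomputable section

open scoped Classical

namespace PaperZig

/-- Generators of the affine zigzag algebra: the idempotent `e_i` at each vertex
`i : ZMod d` and, for each ordered pair `(i,j)`, a generator `(i|j)` (which is set to
zero unless `i` and `j` are adjacent, in which case it is the arrow from `j` to `i`). -/
inductive ZigGen (d : ℕ) : Type
  | vert : ZMod d → ZigGen d
  | arr : ZMod d → ZMod d → ZigGen d

abbrev FZ (d : ℕ) : Type := FreeAlgebra ℂ (ZigGen d)

def zv (d : ℕ) (i : ZMod d) : FZ d := FreeAlgebra.ι ℂ (ZigGen.vert i)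
def zar (d : ℕ) (i j : ZMod d) : FZ d := FreeAlgebra.ι ℂ (ZigGen.arr i j)

/-- The defining relations of the affine zigzag algebra `Ẑ_d`: the path-algebra
relations for the double of the affine type A quiver, together with the zigzag
relations `(i|i+1|i+2) = 0 = (i|i-1|i-2)`, `(i|i+1|i) = (i|i-1|i)` for `i ≠ 0` and
`(0|1|0) = (-1)^d (0|d-1|0)`. -/
inductive ZigRel (d : ℕ) [NeZero d] : FZ d → FZ d → Prop
  | idem (i : ZMod d) : ZigRel d (zv d i * zv d i) (zv d i)
  | orth (i j : ZMod d) : i ≠ j → ZigRel d (zv d i * zv d j) 0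
  | total : ZigRel d (∑ i : ZMod d, zv d i) 1
  | nonadj (i j : ZMod d) : ¬(i = j + 1 ∨ j = i + 1) → ZigRel d (zar d i j) 0
  | target (i j : ZMod d) : ZigRel d (zv d i * zar d i j) (zar d i j)
  | source (i j : ZMod d) : ZigRel d (zar d i j * zv d j) (zar d i j)
  | comp₁ (i : ZMod d) : ZigRel d (zar d i (i + 1) * zar d (i + 1) (i + 2)) 0
  | comp₂ (i : ZMod d) : ZigRel d (zar d i (i - 1) * zar d (i - 1) (i - 2)) 0
  | loop (i : ZMod d) : i ≠ 0 →
      ZigRel d (zar d i (i + 1) * zar d (i + 1) i) (zar d i (i - 1) * zar d (i - 1) i)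
  | loop₀ : ZigRel d (zar d 0 1 * zar d 1 0)
      ((-1 : FZ d) ^ d * (zar d 0 (-1) * zar d (-1) 0))

/-- The affine zigzag algebra `Ẑ_d`. -/
abbrev Zig (d : ℕ) [NeZero d] : Type := RingQuot (ZigRel d)

/-- The idempotent `e_i` of `Ẑ_d`. -/
def ze (d : ℕ) [NeZero d] (i : ZMod d) : Zig d := RingQuot.mkAlgHom ℂ (ZigRel d) (zv d i)

/-- The path `(i|j)` in `Ẑ_d`. -/
def za (d : ℕ) [NeZero d] (i j : ZMod d) : Zig d := RingQuot.mkAlgHom ℂ (ZigRel d) (zar d i j)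

/-- The loop `ℓ_i = (i|i+1|i)` in `Ẑ_d`. -/
def zl (d : ℕ) [NeZero d] (i : ZMod d) : Zig d := za d i (i + 1) * za d (i + 1) i

/-- The defining property of the rotation automorphism `τ` of `Ẑ_d`:
`e_i ↦ e_{i+1}`, `(0|d-1) ↦ (-1)^d (1|0)` and `(i|j) ↦ (i+1|j+1)` for all other
adjacent pairs. -/
def IsTau (d : ℕ) [NeZero d] (τ : Zig d ≃ₐ[ℂ] Zig d) : Prop :=
  (∀ i : ZMod d, τ (ze d i) = ze d (i + 1)) ∧
    τ (za d 0 (-1)) = (-1 : Zig d) ^ d * za d 1 0 ∧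
    (∀ i j : ZMod d, (i = j + 1 ∨ j = i + 1) → ¬(i = 0 ∧ j = -1) →
      τ (za d i j) = za d (i + 1) (j + 1))
lemma tw_one_ne_zero {d : ℕ} (hd : 3 ≤ d) : (1 : ZMod d) ≠ 0 := by
  intro h
  have := (ZMod.natCast_eq_zero_iff 1 d).1 (by exact_mod_cast h)
  exact absurd (Nat.le_of_dvd (by norm_num) this) (by omega)

lemma tw_two_ne_zero {d : ℕ} (hd : 3 ≤ d) : (2 : ZMod d) ≠ 0 := by
  intro h
  have := (ZMod.natCast_eq_zero_iff 2 d).1 (by exact_mod_cast h)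
  exact absurd (Nat.le_of_dvd (by norm_num) this) (by omega)

/-- The scalar by which `τ` twists the translation `(i|j) ↦ (i+1|j+1)`. -/
def twist (d : ℕ) (i j : ZMod d) : ℂ := if i = 0 ∧ j = -1 then (-1) ^ d else 1

lemma neg_one_pow_mul_self (d : ℕ) : ((-1 : ℂ) ^ d) * (-1) ^ d = 1 := by
  rw [← mul_pow]; simp

lemma twist_mul_self {d : ℕ} (i j : ZMod d) : twist d i j * twist d i j = 1 := by
  unfold twist
  split_ifs
  · exact neg_one_pow_mul_self d
  · simp

lemma twist_of_even {d : ℕ} (h : Even d) (i j : ZMod d) : twist d i j = 1 := by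
  simp [twist, h.neg_one_pow]

section relations

variable {d : ℕ} [NeZero d]

lemma ze_mul_self (i : ZMod d) : ze d i * ze d i = ze d i := by
  simpa [ze] using RingQuot.mkAlgHom_rel ℂ (ZigRel.idem i)

lemma ze_mul_ne {i j : ZMod d} (h : i ≠ j) : ze d i * ze d j = 0 := by
  simpa [ze] using RingQuot.mkAlgHom_rel ℂ (ZigRel.orth i j h)

lemma ze_sum : ∑ i : ZMod d, ze d i = 1 := by
  simpa [ze] using RingQuot.mkAlgHom_rel ℂ (ZigRel.total (d := d))

lemma za_nonadj {i j : ZMod d} (h : ¬(i = j + 1 ∨ j = i + 1)) : za d i j = 0 := by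
  simpa [za] using RingQuot.mkAlgHom_rel ℂ (ZigRel.nonadj i j h)

lemma ze_mul_za (i j : ZMod d) : ze d i * za d i j = za d i j := by
  simpa [za, ze] using RingQuot.mkAlgHom_rel ℂ (ZigRel.target i j)

lemma za_mul_ze (i j : ZMod d) : za d i j * ze d j = za d i j := by
  simpa [za, ze] using RingQuot.mkAlgHom_rel ℂ (ZigRel.source i j)

lemma za_up_up {i j k : ZMod d} (hj : j = i + 1) (hk : k = i + 2) :
    za d i j * za d j k = 0 := by
  subst hj hk
  simpa [za] using RingQuot.mkAlgHom_rel ℂ (ZigRel.comp₁ i)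

lemma za_down_down {i j k : ZMod d} (hj : j = i - 1) (hk : k = i - 2) :
    za d i j * za d j k = 0 := by
  subst hj hk
  simpa [za] using RingQuot.mkAlgHom_rel ℂ (ZigRel.comp₂ i)

lemma za_loop {i j k : ZMod d} (hi : i ≠ 0) (hj : j = i + 1) (hk : k = i - 1) :
    za d i j * za d j i = za d i k * za d k i := by
  subst hj hk
  simpa [za] using RingQuot.mkAlgHom_rel ℂ (ZigRel.loop i hi)

lemma za_loop_zero :
    za d 0 1 * za d 1 0 = (-1 : ℂ) ^ d • (za d 0 (-1) * za d (-1) 0) := by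
  have h := RingQuot.mkAlgHom_rel ℂ (ZigRel.loop₀ (d := d))
  simp only [map_mul, map_pow, map_neg, map_one] at h
  rw [Algebra.smul_def, map_pow, map_neg, map_one]
  exact h

/-- The values of `τ` on the generators of the free algebra. -/
def tauGen (d : ℕ) [NeZero d] : ZigGen d → Zig d
  | .vert i => ze d (i + 1)
  | .arr i j => twist d i j • za d (i + 1) (j + 1)

lemma lift_zv (i : ZMod d) : FreeAlgebra.lift ℂ (tauGen d) (zv d i) = ze d (i + 1) := by
  simp [zv, tauGen]

lemma lift_zar (i j : ZMod d) :
    FreeAlgebra.lift ℂ (tauGen d) (zar d i j) = twist d i j • za d (i + 1) (j + 1) := by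
  simp [zar, tauGen]

lemma tauGen_rel (hd : 3 ≤ d) ⦃x y : FZ d⦄ (h : ZigRel d x y) :
    FreeAlgebra.lift ℂ (tauGen d) x = FreeAlgebra.lift ℂ (tauGen d) y := by
  have h1 := tw_one_ne_zero hd
  have h2 := tw_two_ne_zero hd
  cases h with
  | idem i => simp only [map_mul, lift_zv, ze_mul_self]
  | orth i j hij =>
    simp only [map_mul, lift_zv, map_zero]
    exact ze_mul_ne fun h => hij (add_right_cancel h)
  | total =>
    simp only [map_sum, lift_zv, map_one]
    rw [← ze_sum]
    exact Fintype.sum_equiv (Equiv.addRight (1 : ZMod d)) _ _ fun _ => rfl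
  | nonadj i j hij =>
    rw [lift_zar, za_nonadj, smul_zero, map_zero]
    simpa using hij
  | target i j => simp only [map_mul, lift_zv, lift_zar, mul_smul_comm, ze_mul_za]
  | source i j => simp only [map_mul, lift_zv, lift_zar, smul_mul_assoc, za_mul_ze]
  | comp₁ i =>
    simp only [map_mul, lift_zar, smul_mul_assoc, mul_smul_comm, map_zero]
    rw [za_up_up (by ring) (by ring), smul_zero, smul_zero]
  | comp₂ i =>
    simp only [map_mul, lift_zar, smul_mul_assoc, mul_smul_comm, map_zero]
    rw [za_down_down (by ring) (by ring), smul_zero, smul_zero]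
  | loop i hi =>
    simp only [map_mul, lift_zar, smul_mul_assoc, mul_smul_comm]
    have t1 : twist d i (i + 1) = 1 := by simp [twist, hi]
    have t2 : twist d i (i - 1) = 1 := by simp [twist, hi]
    have t3 : twist d (i - 1) i = 1 := by
      refine if_neg fun h => h2 ?_
      linear_combination h.2 - h.1
    rw [t1, t2, t3]
    by_cases hm : i = -1
    · -- The loop at `-1` becomes the loop at `0`, where the twist supplies the sign.
      have t4 : twist d (i + 1) i = (-1) ^ d := by simp [twist, hm]
      have e0 : i + 1 = 0 := by rw [hm]; ring
      have e1 : i - 1 + 1 = -1 := by rw [hm]; ring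
      rw [t4, e1, e0, zero_add, za_loop_zero]
      simp only [one_smul, smul_smul, one_mul, neg_one_pow_mul_self]
    · have t4 : twist d (i + 1) i = 1 := by simp [twist, hm]
      have e0 : i + 1 ≠ 0 := fun h => hm (eq_neg_of_add_eq_zero_left h)
      rw [t4]
      simp only [one_smul]
      exact za_loop e0 (by ring) (by ring)
  | loop₀ =>
    simp only [map_mul, map_pow, map_neg, map_one, lift_zar, smul_mul_assoc, mul_smul_comm]
    have hn : (1 : ZMod d) ≠ -1 := fun h => h2 (by linear_combination h)
    have t1 : twist d 0 1 = 1 := by simp [twist, hn]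
    have t2 : twist d 1 0 = 1 := by simp [twist, h1]
    have t3 : twist d 0 (-1) = (-1) ^ d := by simp [twist]
    have t4 : twist d (-1) 0 = 1 := by simp [twist, h1]
    have hs (x : Zig d) : (-1 : Zig d) ^ d * x = (-1 : ℂ) ^ d • x := by
      rw [Algebra.smul_def, map_pow, map_neg, map_one]
    rw [t1, t2, t3, t4, hs]
    simp only [one_smul, smul_smul, neg_one_pow_mul_self]
    exact za_loop (by simpa using h1) (by ring) (by ring)

/-- The rotation `τ` as an algebra endomorphism. -/
def tauHom (hd : 3 ≤ d) : Zig d →ₐ[ℂ] Zig d :=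
  RingQuot.liftAlgHom ℂ ⟨FreeAlgebra.lift ℂ (tauGen d), tauGen_rel hd⟩

/-- An endomorphism of `Ẑ_d` acting on all generators, including the zero ones, by the rule
defining `τ`. -/
def IsTwistedShift (f : Zig d →ₐ[ℂ] Zig d) : Prop :=
  (∀ i, f (ze d i) = ze d (i + 1)) ∧ ∀ i j, f (za d i j) = twist d i j • za d (i + 1) (j + 1)

lemma isTwistedShift_tauHom (hd : 3 ≤ d) : IsTwistedShift (tauHom hd) := by
  constructor
  · intro i
    rw [ze, tauHom, RingQuot.liftAlgHom_mkAlgHom_apply]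
    exact lift_zv i
  · intro i j
    rw [za, tauHom, RingQuot.liftAlgHom_mkAlgHom_apply]
    exact lift_zar i j

lemma isTau_iff (τ : Zig d ≃ₐ[ℂ] Zig d) :
    IsTau d τ ↔ IsTwistedShift (τ : Zig d →ₐ[ℂ] Zig d) := by
  have hs (x : Zig d) : (-1 : Zig d) ^ d * x = (-1 : ℂ) ^ d • x := by
    rw [Algebra.smul_def, map_pow, map_neg, map_one]
  constructor
  · rintro ⟨he, h0, ha⟩
    refine ⟨he, fun i j => ?_⟩
    change τ (za d i j) = _
    by_cases hij : i = 0 ∧ j = -1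
    · obtain ⟨rfl, rfl⟩ := hij
      rw [h0, hs]
      simp [twist]
    · by_cases hadj : i = j + 1 ∨ j = i + 1
      · rw [ha i j hadj hij, twist, if_neg hij, one_smul]
      · rw [za_nonadj hadj, za_nonadj (by simpa using hadj), map_zero, smul_zero]
  · rintro ⟨he, ha⟩
    refine ⟨he, ?_, fun i j _ hij => ?_⟩
    · refine (ha 0 (-1)).trans ?_
      rw [hs]
      simp [twist]
    · refine (ha i j).trans ?_
      rw [twist, if_neg hij, one_smul]

/-- The elements `e_i` and `(i|j)` generate `Ẑ_d`. -/
lemma zig_hom_ext {f g : Zig d →ₐ[ℂ] Zig d} (he : ∀ i, f (ze d i) = g (ze d i))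
    (ha : ∀ i j, f (za d i j) = g (za d i j)) : f = g := by
  apply RingQuot.ringQuot_ext'
  apply FreeAlgebra.hom_ext
  funext x
  cases x with
  | vert i => exact he i
  | arr i j => exact ha i j

lemma IsTwistedShift.pow_ze {f : Zig d →ₐ[ℂ] Zig d} (hf : IsTwistedShift f) (n : ℕ)
    (i : ZMod d) : (f ^ n) (ze d i) = ze d (i + n) := by
  induction n with
  | zero => simp
  | succ n ih =>
    rw [pow_succ', AlgHom.mul_apply, ih, hf.1]
    push_cast
    rw [add_assoc]

lemma IsTwistedShift.pow_za {f : Zig d →ₐ[ℂ] Zig d} (hf : IsTwistedShift f) (n : ℕ)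
    (i j : ZMod d) : (f ^ n) (za d i j) =
      (∏ k ∈ Finset.range n, twist d (i + k) (j + k)) • za d (i + n) (j + n) := by
  induction n with
  | zero => simp
  | succ n ih =>
    rw [pow_succ', AlgHom.mul_apply, ih, map_smul, hf.2, smul_smul, Finset.prod_range_succ]
    push_cast
    rw [add_assoc, add_assoc]

lemma IsTwistedShift.pow_two_mul {f : Zig d →ₐ[ℂ] Zig d} (hf : IsTwistedShift f) :
    f ^ (2 * d) = 1 := by
  refine zig_hom_ext (fun i => ?_) (fun i j => ?_)
  · rw [hf.pow_ze]; simp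
  · rw [hf.pow_za, two_mul, Finset.prod_range_add]
    simp only [Nat.cast_add, CharP.cast_eq_zero, zero_add, add_zero, ← Finset.prod_mul_distrib,
      twist_mul_self, Finset.prod_const_one, one_smul, AlgHom.one_apply]

lemma IsTwistedShift.pow_of_even {f : Zig d →ₐ[ℂ] Zig d} (hf : IsTwistedShift f)
    (h : Even d) : f ^ d = 1 := by
  refine zig_hom_ext (fun i => ?_) (fun i j => ?_)
  · rw [hf.pow_ze]; simp
  · rw [hf.pow_za]
    simp [twist_of_even h]

lemma coe_equiv_pow (τ : Zig d ≃ₐ[ℂ] Zig d) (n : ℕ) (x : Zig d) :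
    (τ ^ n) x = ((τ : Zig d →ₐ[ℂ] Zig d) ^ n) x := by
  induction n with
  | zero => simp
  | succ n ih =>
    rw [pow_succ', pow_succ', AlgEquiv.mul_apply, AlgHom.mul_apply, ih]
    rfl

lemma equiv_pow_eq_one {τ : Zig d ≃ₐ[ℂ] Zig d} {n : ℕ}
    (h : (τ : Zig d →ₐ[ℂ] Zig d) ^ n = 1) : τ ^ n = 1 := by
  ext x
  rw [coe_equiv_pow, h]
  rfl

end relations

/-- The rotation `τ`, with inverse `τ^{2d-1}`. -/
def tauEquiv {d : ℕ} [NeZero d] (hd : 3 ≤ d) : Zig d ≃ₐ[ℂ] Zig d :=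
  AlgEquiv.ofAlgHom (tauHom hd) (tauHom hd ^ (2 * d - 1))
    (by
      change tauHom hd * tauHom hd ^ (2 * d - 1) = 1
      rw [← pow_succ', Nat.sub_add_cancel (by omega)]
      exact (isTwistedShift_tauHom hd).pow_two_mul)
    (by
      change tauHom hd ^ (2 * d - 1) * tauHom hd = 1
      rw [← pow_succ, Nat.sub_add_cancel (by omega)]
      exact (isTwistedShift_tauHom hd).pow_two_mul)

/-- the rotation assignment extends to a (unique) well-defined
`ℂ`-algebra automorphism `τ` of `Ẑ_d`; moreover `τ^d = id` if `d` is even and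
`τ^{2d} = id` if `d` is odd. -/
theorem statement16 (d : ℕ) [NeZero d] (hd : 3 ≤ d) :
    (∃! τ : Zig d ≃ₐ[ℂ] Zig d, IsTau d τ) ∧
    (∀ τ : Zig d ≃ₐ[ℂ] Zig d, IsTau d τ →
      ((Even d → τ ^ d = 1) ∧ (Odd d → τ ^ (2 * d) = 1))) := by
  refine ⟨⟨tauEquiv hd, (isTau_iff _).2 (isTwistedShift_tauHom hd), fun σ hσ => ?_⟩,
    fun τ hτ => ⟨fun h => ?_, fun _ => ?_⟩⟩
  · have h1 := (isTau_iff σ).1 hσ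
    have h2 := isTwistedShift_tauHom hd
    have h : (σ : Zig d →ₐ[ℂ] Zig d) = tauHom hd :=
      zig_hom_ext (fun i => (h1.1 i).trans (h2.1 i).symm)
        (fun i j => (h1.2 i j).trans (h2.2 i j).symm)
    ext x
    exact DFunLike.congr_fun h x
  · exact equiv_pow_eq_one (((isTau_iff τ).1 hτ).pow_of_even h)
  · exact equiv_pow_eq_one ((isTau_iff τ).1 hτ).pow_two_mul

end PaperZig
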